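/- Let c̄ be a k-cd for n nodes (n ≥ 1), let m ∈ M(c̄), and let ℓ ∈ [k] ∖ {m} be such that c_ℓ = max_{h∈[k]∖{m}} c_h. If M(c̄) = {m}, then μ_ℓ(c̄) = c_ℓ·(1 + γ(c̄) + α(c̄) − s(c̄)/n). -/

import Mathlib

open Finset

/-- The color appearing at least twice among `x, y, z`, or `x` if all three are distinct. -/
def maj3 {k : ℕ} (x y z : Fin k) : Fin k := if y = z then y else x

/-- Number of nodes with color `j` in the assignment `a`. -/
def cnt {n k : ℕ} (a : Fin n → Fin k) (j : Fin k) : ℕ :=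
  (Finset.univ.filter (fun i => a i = j)).card

/-- One sample for a round of the 3-majority dynamics: each node picks three nodes
(uniformly at random, with replacement). -/
abbrev Sample (n : ℕ) := Fin n → Fin n × Fin n × Fin n

/-- The assignment obtained from `a` after one step of the 3-majority dynamics with samples `S`. -/
def stepA {n k : ℕ} (a : Fin n → Fin k) (S : Sample n) : Fin n → Fin k :=
  fun i => maj3 (a (S i).1) (a (S i).2.1) (a (S i).2.2)

/-- Probability that the event `E` holds for the configuration obtained from `a`
after one step of the 3-majority dynamics (samples are uniform and independent). -/
noncomputable def stepPr {n k : ℕ} (a : Fin n → Fin k) (E : (Fin n → Fin k) → Prop) : ℝ :=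
  (Nat.card {S : Sample n // E (stepA a S)} : ℝ) / (Nat.card (Sample n) : ℝ)

/-- Expectation of `f` of the configuration obtained from `a` after one step of the
3-majority dynamics. -/
noncomputable def stepE {n k : ℕ} (a : Fin n → Fin k) (f : (Fin n → Fin k) → ℝ) : ℝ :=
  (∑ S : Sample n, f (stepA a S)) / (Nat.card (Sample n) : ℝ)

/-- `m(c̄)`: the size of the largest color class. -/
def mval {k : ℕ} (c : Fin k → ℕ) : ℕ := Finset.univ.sup c

/-- `M(c̄)`: the set of colors attaining the maximum. -/
def Mset {k : ℕ} (c : Fin k → ℕ) : Finset (Fin k) :=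
  Finset.univ.filter (fun j => c j = mval c)

/-- `s(c̄)`: the bias, i.e. the gap between the (unique) maximum and the second largest
color class; `0` if the maximum is not unique. -/
def sval {k : ℕ} (c : Fin k → ℕ) : ℕ :=
  if (Mset c).card = 1 then mval c - (Finset.univ \ Mset c).sup c else 0

/-- `α(c̄) = (n − m(c̄))·s(c̄)/n²`. -/
noncomputable def alphaV (n : ℕ) {k : ℕ} (c : Fin k → ℕ) : ℝ :=
  ((n : ℝ) - mval c) * sval c / (n : ℝ) ^ 2

/-- `γ(c̄) = (n·m(c̄) − Σ_h c_h²)/n² − α(c̄)`. -/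
noncomputable def gammaV (n : ℕ) {k : ℕ} (c : Fin k → ℕ) : ℝ :=
  ((n : ℝ) * mval c - ∑ h, (c h : ℝ) ^ 2) / (n : ℝ) ^ 2 - alphaV n c

/-- The trajectory of the 3-majority dynamics started at `a`, driven by the samples `S`
for the first `N` rounds. -/
def trajA {n k N : ℕ} (a : Fin n → Fin k) (S : Fin N → Sample n) : ℕ → Fin n → Fin k
  | 0 => a
  | t + 1 => if h : t < N then stepA (trajA a S t) (S ⟨t, h⟩) else trajA a S t

/-- Probability of an event `E` for an `N`-round run of the 3-majority dynamics
(all samples of all rounds are uniform and independent). -/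
noncomputable def runPr {n k : ℕ} (N : ℕ) (a : Fin n → Fin k)
    (E : (Fin N → Sample n) → Prop) : ℝ :=
  (Nat.card {S : Fin N → Sample n // E S} : ℝ) / (Nat.card (Fin N → Sample n) : ℝ)

/-!
A node ends with color `j` exactly when its second and third samples both have color `j`, or when
these two disagree and its first sample has color `j`. By independence of the three samples this
gives `μ_j = c_j (1 + (n c_j - Σ_h c_h²) / n²)` for every color `j`. The claim follows for `j = ℓ`
because `c_ℓ = m(c̄) - s(c̄)`; if several colors attain the maximum, both sides are `m(c̄)`.
-/

open scoped BigOperators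

lemma expect_comp_eval {ι κ M : Type*} [Fintype ι] [DecidableEq ι] [Fintype κ] [AddCommMonoid M]
    [Module ℚ≥0 M] (i : ι) (g : κ → M) : 𝔼 S : ι → κ, g (S i) = 𝔼 x, g x := by
  cases isEmpty_or_nonempty κ with
  | inl _ =>
    have : IsEmpty (ι → κ) := ⟨fun S => isEmptyElim (S i)⟩
    simp only [univ_eq_empty, expect_empty]
  | inr _ =>
    calc 𝔼 S : ι → κ, g (S i)
        = 𝔼 p : κ × ({j // j ≠ i} → κ), g p.1 :=
          Fintype.expect_equiv (Equiv.funSplitAt i κ) _ _ fun _ => rfl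
      _ = 𝔼 x, g x := by
          simp only [← univ_product_univ, expect_product, Fintype.expect_const]

section Counting

variable {n k : ℕ} (a : Fin n → Fin k)

lemma stepE_eq_expect (f : (Fin n → Fin k) → ℝ) : stepE a f = 𝔼 S, f (stepA a S) := by
  rw [stepE, Fintype.expect_eq_sum_div_card, Nat.card_eq_fintype_card]

lemma sum_boole_eq_cnt {R : Type*} [NonAssocSemiring R] (j : Fin k) :
    ∑ i, (if a i = j then (1 : R) else 0) = cnt a j :=
  sum_boole _ _

lemma sum_comp_eq_sum_cnt_nsmul {M : Type*} [AddCommMonoid M] (g : Fin k → M) :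
    ∑ i, g (a i) = ∑ h, cnt a h • g h := by
  simp only [← Fintype.sum_fiberwise' a g, sum_const, cnt, card_univ, Fintype.card_subtype]

lemma sum_sum_boole_eq {R : Type*} [Semiring R] :
    ∑ y, ∑ z, (if a y = a z then (1 : R) else 0) = ∑ h, (cnt a h : R) ^ 2 :=
  calc ∑ y, ∑ z, (if a y = a z then (1 : R) else 0)
      = ∑ y, (cnt a (a y) : R) := by simp_rw [← sum_boole_eq_cnt a (a _), eq_comm]
    _ = ∑ h, (cnt a h : R) ^ 2 := by
        simp only [sum_comp_eq_sum_cnt_nsmul a fun h => (cnt a h : R), nsmul_eq_mul, sq]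

lemma boole_maj3_eq {R : Type*} [Ring R] (x y z j : Fin k) :
    (if maj3 x y z = j then (1 : R) else 0) =
      (if y = j then 1 else 0) * (if z = j then 1 else 0) +
        (if x = j then 1 else 0) * (1 - if y = z then 1 else 0) := by
  unfold maj3
  rcases eq_or_ne y z with rfl | hyz
  · simp only [if_true, sub_self, mul_zero, add_zero, ite_zero_mul_ite_zero, and_self, mul_one]
  · have hne : ¬(y = j ∧ z = j) := fun h => hyz (h.1.trans h.2.symm)
    simp only [if_neg hyz, ite_zero_mul_ite_zero, if_neg hne, zero_add, sub_zero, mul_one]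

lemma sum_boole_maj3_eq {R : Type*} [CommRing R] (j : Fin k) :
    ∑ t : Fin n × Fin n × Fin n, (if maj3 (a t.1) (a t.2.1) (a t.2.2) = j then (1 : R) else 0) =
      n * (cnt a j : R) ^ 2 + cnt a j * ((n : R) ^ 2 - ∑ h, (cnt a h : R) ^ 2) := by
  simp_rw [Fintype.sum_prod_type, boole_maj3_eq, sum_add_distrib, ← mul_sum, sum_sub_distrib,
    sum_sum_boole_eq, ← sum_mul, sum_boole_eq_cnt, sum_const, card_univ, Fintype.card_fin,
    nsmul_eq_mul]
  ring

lemma stepE_comp_eval_eq_expect (f : Fin k → ℝ) (i : Fin n) :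
    stepE a (fun b => f (b i)) =
      𝔼 t : Fin n × Fin n × Fin n, f (maj3 (a t.1) (a t.2.1) (a t.2.2)) := by
  rw [stepE_eq_expect]
  exact expect_comp_eval i fun t : Fin n × Fin n × Fin n => f (maj3 (a t.1) (a t.2.1) (a t.2.2))

lemma stepE_cnt_eq_mul_expect (j : Fin k) :
    stepE a (fun b => (cnt b j : ℝ)) =
      n * 𝔼 t : Fin n × Fin n × Fin n, if maj3 (a t.1) (a t.2.1) (a t.2.2) = j then 1 else 0 :=
  calc stepE a (fun b => (cnt b j : ℝ))
      = ∑ i, stepE a (fun b => if b i = j then (1 : ℝ) else 0) := by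
        simp only [stepE_eq_expect, ← sum_boole_eq_cnt, expect_sum_comm]
    _ = _ := by
        simp only [stepE_comp_eval_eq_expect a (fun h => if h = j then (1 : ℝ) else 0), sum_const,
          card_univ, Fintype.card_fin, nsmul_eq_mul]

lemma stepE_cnt_eq (hn : n ≠ 0) (j : Fin k) :
    stepE a (fun b => (cnt b j : ℝ)) =
      cnt a j * (1 + (n * cnt a j - ∑ h, (cnt a h : ℝ) ^ 2) / (n : ℝ) ^ 2) := by
  rw [stepE_cnt_eq_mul_expect, Fintype.expect_eq_sum_div_card, sum_boole_maj3_eq]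
  simp only [Fintype.card_prod, Fintype.card_fin, Nat.cast_mul]
  field_simp
  ring

end Counting

lemma sval_eq_mval_sub_sup_erase {k : ℕ} {c : Fin k → ℕ} {m : Fin k} (hm : m ∈ Mset c) :
    sval c = mval c - (univ.erase m).sup c := by
  rcases eq_singleton_or_nontrivial hm with hM | hM
  · rw [sval, hM, card_singleton, if_pos rfl, sdiff_singleton_eq_erase]
  · obtain ⟨m', hm', hne⟩ := hM.exists_ne m
    have hmax : mval c ≤ (univ.erase m).sup c :=
      (mem_filter.mp hm').2 ▸ le_sup (mem_erase.mpr ⟨hne, mem_univ m'⟩)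
    rw [sval, if_neg (one_lt_card_iff_nontrivial.mpr hM).ne', Nat.sub_eq_zero_of_le hmax]

theorem mu_second_eq_general {n k : ℕ} (hn : n ≠ 0) (a : Fin n → Fin k) {m ℓ : Fin k}
    (hm : m ∈ Mset (cnt a)) (hℓ : cnt a ℓ = (univ.erase m).sup (cnt a)) :
    stepE a (fun b => (cnt b ℓ : ℝ)) =
      cnt a ℓ * (1 + gammaV n (cnt a) + alphaV n (cnt a) - sval (cnt a) / n) := by
  have hle : cnt a ℓ ≤ mval (cnt a) := le_sup (mem_univ ℓ)
  have hs : (sval (cnt a) : ℝ) = mval (cnt a) - cnt a ℓ := by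
    rw [sval_eq_mval_sub_sup_erase hm, ← hℓ, Nat.cast_sub hle]
  rw [stepE_cnt_eq a hn, gammaV, add_assoc 1, sub_add_cancel, hs]
  field_simp
  ring

/-- Lemma (3maj-max-expected), part (c): if `M(c̄) = {m}` and `ℓ ≠ m` attains the
second-largest color class, then `μ_ℓ(c̄) = c_ℓ·(1 + γ(c̄) + α(c̄) − s(c̄)/n)`. -/
theorem mu_second_eq (n k : ℕ) (hn : 1 ≤ n) (c : Fin k → ℕ) (hc : ∑ h, c h = n)
    (a : Fin n → Fin k) (ha : ∀ h, cnt a h = c h) (m ℓ : Fin k) (hm : m ∈ Mset c)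
    (hℓm : ℓ ≠ m) (hℓ : c ℓ = (Finset.univ.erase m).sup c) (hM : Mset c = {m}) :
    stepE a (fun b => (cnt b ℓ : ℝ)) =
      (c ℓ : ℝ) * (1 + gammaV n c + alphaV n c - (sval c : ℝ) / (n : ℝ)) := by
  obtain rfl : cnt a = c := funext ha
  exact mu_second_eq_general (Nat.one_le_iff_ne_zero.mp hn) a hm hℓ
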